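/- Let S and T be totally irreducible d-by-d integer matrix automorphisms of the d-dimensional torus with equal weak stable subspaces V_S^{0-} = V_T^{0-}, and suppose gcd(d, dim V_S^{0-}) = 1 (with 0 < dim V_S^{0-} < d). Then S and T commute. -/

import Mathlib

/-- The weak stable subspace `V_S^{0-}` of an integer matrix `S`, i.e. the sum of the
generalized real eigenspaces for eigenvalues of modulus at most `1`.  For diagonalizable
matrices this is exactly the set of vectors with bounded forward orbit, which is how we
formalize it. -/
noncomputable def weakStableSubspace (d : ℕ) (A : Matrix (Fin d) (Fin d) ℤ) :
    Submodule ℝ (Fin d → ℝ) :=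
  Submodule.span ℝ
    {v : Fin d → ℝ | ∃ C : ℝ, ∀ n : ℕ, ‖((A.map (Int.cast : ℤ → ℝ)) ^ n).mulVec v‖ ≤ C}

open Module in
/-- If the endomorphism ring of a finite-dimensional vector space over a division ring acts on a
finite-dimensional vector space `W` over a field of characteristic zero, then the dimension of the
former divides the dimension of `W`. -/
theorem finrank_dvd_finrank_of_moduleEnd_ringHom {K M F W : Type*} [DivisionRing K]
    [AddCommGroup M] [Module K M] [Module.Finite K M] [Field F] [CharZero F] [AddCommGroup W]
    [Module F W] [Module.Finite F W] (f : Module.End K M →+* Module.End F W) :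
    finrank K M ∣ finrank F W := by
  classical
  let b := finBasis K M
  let e : Fin (finrank K M) → Fin (finrank K M) → Module.End K M := fun i j =>
    (LinearMap.toSpanSingleton K M (b i)).comp (b.coord j)
  have he : ∀ i j k, e i j * e j k = e i k := by
    intro i j k
    ext x
    simp [e]
  have hsum : ∑ i, e i i = 1 := by
    ext x
    simp [e, LinearMap.sum_apply, b.sum_repr]
  have htr : ∀ i j, LinearMap.trace F W (f (e i i)) = LinearMap.trace F W (f (e j j)) := by
    intro i j
    rw [← he i j i, ← he j i j, f.map_mul, f.map_mul, LinearMap.trace_mul_comm]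
  rcases Nat.eq_zero_or_pos (finrank K M) with h0 | hpos
  · have : IsEmpty (Fin (finrank K M)) := by rw [h0]; infer_instance
    have h1 : (1 : Module.End F W) = 0 := by
      rw [← map_one f, ← hsum]; simp
    have : (finrank F W : F) = 0 := by
      rw [← LinearMap.trace_one, h1, map_zero]
    rw [Nat.cast_eq_zero.mp this]
    exact dvd_zero _
  · let i₀ : Fin (finrank K M) := ⟨0, hpos⟩
    have hid : IsIdempotentElem (f (e i₀ i₀)) := by
      rw [IsIdempotentElem, ← map_mul, he]
    refine ⟨finrank F (LinearMap.range (f (e i₀ i₀))), ?_⟩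
    have : (finrank F W : F) =
        ((finrank K M * finrank F (LinearMap.range (f (e i₀ i₀))) : ℕ) : F) := by
      rw [← LinearMap.trace_one, ← map_one f, ← hsum, map_sum, map_sum,
        Finset.sum_congr rfl fun i _ => htr i i₀, Nat.cast_mul, ← (LinearMap.IsIdempotentElem.isProj_range _ hid).trace]
      simp
    exact_mod_cast this

open Module in
/-- A simple faithful module `M`, finite over its endomorphism division ring, whose coefficient
ring acts on two spaces of coprime dimension has a transitive endomorphism ring. -/
theorem exists_moduleEnd_apply_eq_of_coprime {A M F W₁ W₂ : Type*} [Ring A]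
    [AddCommGroup M] [Module A M] [FaithfulSMul A M] [IsSimpleModule A M]
    [Module.Finite (Module.End A M) M] [Field F] [CharZero F]
    [AddCommGroup W₁] [Module F W₁] [Module.Finite F W₁]
    [AddCommGroup W₂] [Module F W₂] [Module.Finite F W₂]
    (f₁ : A →+* Module.End F W₁) (f₂ : A →+* Module.End F W₂)
    (h : Nat.Coprime (finrank F W₁) (finrank F W₂)) {x : M} (hx : x ≠ 0) (y : M) :
    ∃ g : Module.End A M, g x = y := by
  classical
  have hinj : Function.Injective (Module.toModuleEnd (Module.End A M) (S := A) M) :=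
    fun a b hab => FaithfulSMul.eq_of_smul_eq_smul fun z => congr($hab z)
  let E : A ≃+* Module.End (Module.End A M) M := RingEquiv.ofBijective
    (Module.toModuleEnd (Module.End A M) (S := A) M)
    ⟨hinj, Module.Finite.toModuleEnd_moduleEnd_surjective⟩
  have h1 : finrank (Module.End A M) M = 1 := Nat.eq_one_of_dvd_coprimes h
    (finrank_dvd_finrank_of_moduleEnd_ringHom (f₁.comp (E.symm : _ →+* A)))
    (finrank_dvd_finrank_of_moduleEnd_ringHom (f₂.comp (E.symm : _ →+* A)))
  exact (finrank_eq_one_iff_of_nonzero' x hx).mp h1 y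

open Polynomial Module in
/-- A nonzero invariant subspace of an endomorphism with irreducible characteristic polynomial is
the whole space. -/
theorem LinearMap.eq_top_of_irreducible_charpoly {k M : Type*} [Field k] [AddCommGroup M]
    [Module k M] [Module.Finite k M] {s : Module.End k M} (hs : Irreducible s.charpoly)
    (N : Submodule k M) (hN : ∀ x ∈ N, s x ∈ N) {x : M} (hxN : x ∈ N) (hx : x ≠ 0) : N = ⊤ := by
  have hmem : ∀ p : k[X], aeval s p x ∈ N := by
    intro p
    induction p using Polynomial.induction_on' with
    | add p q hp hq => simpa using N.add_mem hp hq
    | monomial n a =>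
      rw [aeval_monomial]
      refine N.smul_mem a ?_
      induction n with
      | zero => simpa
      | succ n ih => rw [pow_succ']; exact hN _ ih
  let g : degreeLT k (finrank k M) →ₗ[k] N :=
    { toFun := fun p => ⟨aeval s p.1 x, hmem p.1⟩
      map_add' := fun p q => by ext; simp
      map_smul' := fun a p => by ext; simp }
  have hg : Function.Injective g := by
    rw [injective_iff_map_eq_zero]
    intro p hp
    by_contra hp0
    have hp1 : aeval s p.1 x = 0 := congr(($hp : M))
    have hp2 : p.1 ≠ 0 := fun h => hp0 (Subtype.ext h)
    have hdeg : p.1.degree < s.charpoly.degree := by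
      rw [s.charpoly_monic.ne_zero |> degree_eq_natDegree, s.charpoly_natDegree]
      exact mem_degreeLT.mp p.2
    obtain ⟨u, v, huv⟩ := hs.coprime_iff_not_dvd.mpr
      fun h => (degree_le_of_dvd h hp2).not_gt hdeg
    apply hx
    have := congr(aeval s $huv x)
    simpa [LinearMap.aeval_self_charpoly, hp1] using this.symm
  refine Submodule.eq_top_of_finrank_eq (le_antisymm N.finrank_le ?_)
  have := LinearMap.finrank_le_finrank_of_injective hg
  rwa [(degreeLTEquiv k _).finrank_eq, finrank_fin_fun] at this

theorem LinearMap.isSimpleModule_of_irreducible_charpoly {k M : Type*} [Field k] [AddCommGroup M]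
    [Module k M] [Module.Finite k M] [Nontrivial M] {s : Module.End k M}
    (hs : Irreducible s.charpoly) (A : Subalgebra k (Module.End k M)) (hsA : s ∈ A) :
    IsSimpleModule A M := by
  refine { eq_bot_or_eq_top := fun N => ?_ }
  refine or_iff_not_imp_left.mpr fun hN => ?_
  obtain ⟨x, hxN, hx⟩ := N.exists_mem_ne_zero_of_ne_bot hN
  have := eq_top_of_irreducible_charpoly hs (N.restrictScalars k)
    (fun y hy => N.smul_mem ⟨s, hsA⟩ hy) hxN hx
  exact (Submodule.restrictScalars_eq_top_iff k A M).mp this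

open Module in
/-- Let `s` have irreducible characteristic polynomial and let `s`, `t` act, compatibly with a ring
homomorphism, on a space `W` with a common invariant subspace whose dimension is coprime to that
of `W`.  Then `s` and `t` commute. -/
theorem LinearMap.commute_of_irreducible_charpoly_of_coprime {k M F W : Type*} [Field k]
    [AddCommGroup M] [Module k M] [Module.Finite k M] [Nontrivial M] [Field F] [CharZero F]
    [Algebra k F] [AddCommGroup W] [Module k W] [Module F W] [IsScalarTower k F W]
    [Module.Finite F W]
    {s t : Module.End k M} (hs : Irreducible s.charpoly)
    (φ : Module.End k M →ₐ[k] Module.End F W) (V : Submodule F W)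
    (hsV : ∀ v ∈ V, φ s v ∈ V) (htV : ∀ v ∈ V, φ t v ∈ V)
    (h : Nat.Coprime (finrank F W) (finrank F V)) : Commute s t := by
  let A := Algebra.adjoin k {s, t}
  have hsA : s ∈ A := Algebra.subset_adjoin (by simp)
  have htA : t ∈ A := Algebra.subset_adjoin (by simp)
  have hA : ∀ a ∈ A, ∀ v ∈ V, φ a v ∈ V := by
    intro a ha
    induction ha using Algebra.adjoin_induction with
    | mem a ha =>
      rcases ha with rfl | rfl
      · exact hsV
      · exact htV
    | algebraMap r =>
      intro v hv
      rw [AlgHom.commutes, Module.algebraMap_end_apply, ← algebraMap_smul F r v]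
      exact V.smul_mem _ hv
    | add a b _ _ ha hb =>
      intro v hv
      rw [map_add]
      exact V.add_mem (ha v hv) (hb v hv)
    | mul a b _ _ ha hb =>
      intro v hv
      rw [map_mul]
      exact ha _ (hb v hv)
  let f : A →+* Module.End F V :=
    { toFun := fun a => (φ a.1).restrict (hA a.1 a.2)
      map_one' := by ext; simp
      map_mul' := fun a b => by ext; simp
      map_zero' := by ext; simp
      map_add' := fun a b => by ext; simp }
  have := isSimpleModule_of_irreducible_charpoly hs A hsA
  have : Module.Finite (Module.End A M) M := Module.Finite.of_restrictScalars_finite k _ M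
  obtain ⟨x, hx⟩ := exists_ne (0 : M)
  obtain ⟨g, hg⟩ := exists_moduleEnd_apply_eq_of_coprime (φ.toRingHom.comp A.subtype) f h hx (s x)
  have hgs : ∀ y, g (s y) = s (g y) := fun y => g.map_smul ⟨s, hsA⟩ y
  have hgt : ∀ y, g (t y) = t (g y) := fun y => g.map_smul ⟨t, htA⟩ y
  have htop := eq_top_of_irreducible_charpoly hs
    (LinearMap.eqLocus (g.restrictScalars k) s) (fun y hy => by
      have hy' : g y = s y := hy
      change g (s y) = s (s y)
      rw [hgs, hy']) (x := x) hg hx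
  have hgeq : ∀ y, g y = s y := fun y => by
    have : y ∈ LinearMap.eqLocus (g.restrictScalars k) s := htop ▸ Submodule.mem_top
    exact this
  ext y
  change s (t y) = t (s y)
  rw [← hgeq, ← hgeq, hgt]

theorem mulVec_mem_weakStableSubspace {d : ℕ} (A : Matrix (Fin d) (Fin d) ℤ) {v : Fin d → ℝ}
    (hv : v ∈ weakStableSubspace d A) :
    (A.map (Int.cast : ℤ → ℝ)).mulVec v ∈ weakStableSubspace d A := by
  have : weakStableSubspace d A ≤
      (weakStableSubspace d A).comap (Matrix.mulVecLin (A.map (Int.cast : ℤ → ℝ))) := by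
    refine Submodule.span_le.mpr ?_
    rintro w ⟨C, hC⟩
    refine Submodule.subset_span ⟨C, fun n => ?_⟩
    rw [Matrix.mulVecLin_apply, Matrix.mulVec_mulVec, ← pow_succ]
    exact hC (n + 1)
  exact this hv

/-- Totally irreducible toral automorphisms `S, T` with equal weak stable
subspaces whose dimension is coprime to `d` must commute. -/
theorem equal_weak_stable_coprime_implies_commute
    (d : ℕ) (S T : Matrix (Fin d) (Fin d) ℤ)
    (hSu : IsUnit S.det) (hTu : IsUnit T.det)
    (hSirr : ∀ n : ℕ, 0 < n → Irreducible (((S ^ n).map (Int.cast : ℤ → ℚ)).charpoly))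
    (hTirr : ∀ n : ℕ, 0 < n → Irreducible (((T ^ n).map (Int.cast : ℤ → ℚ)).charpoly))
    (heq : weakStableSubspace d S = weakStableSubspace d T)
    (hpos : 0 < Module.finrank ℝ (weakStableSubspace d S))
    (hlt : Module.finrank ℝ (weakStableSubspace d S) < d)
    (hgcd : Nat.gcd d (Module.finrank ℝ (weakStableSubspace d S)) = 1) :
    S * T = T * S := by
  have : NeZero d := ⟨by lia⟩
  let q : Matrix (Fin d) (Fin d) ℤ →+* Matrix (Fin d) (Fin d) ℚ := (Int.castRingHom ℚ).mapMatrix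
  let φ : Module.End ℚ (Fin d → ℚ) →ₐ[ℚ] Module.End ℝ (Fin d → ℝ) :=
    ((Matrix.toLinAlgEquiv' (R := ℝ) (n := Fin d)).toAlgHom.restrictScalars ℚ).comp
      ((Algebra.ofId ℚ ℝ).mapMatrix.comp LinearMap.toMatrixAlgEquiv'.toAlgHom)
  have hφ : ∀ (X : Matrix (Fin d) (Fin d) ℤ) (v : Fin d → ℝ),
      φ (Matrix.toLinAlgEquiv' (q X)) v = (X.map (Int.cast : ℤ → ℝ)).mulVec v := by
    intro X v
    have : (Algebra.ofId ℚ ℝ).mapMatrix (q X) = X.map (Int.cast : ℤ → ℝ) := by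
      ext i j
      simp [q]
    simp [φ, this]
  have hcomm : Commute (Matrix.toLinAlgEquiv' (q S)) (Matrix.toLinAlgEquiv' (q T)) := by
    refine LinearMap.commute_of_irreducible_charpoly_of_coprime (F := ℝ) ?_ φ
      (weakStableSubspace d S) (fun v hv => ?_) (fun v hv => ?_) ?_
    · have := hSirr 1 one_pos
      rw [pow_one] at this
      exact (Matrix.charpoly_toLin _ (Pi.basisFun ℚ (Fin d))).symm ▸ this
    · rw [hφ]
      exact mulVec_mem_weakStableSubspace S hv
    · rw [hφ]
      rw [heq] at hv ⊢
      exact mulVec_mem_weakStableSubspace T hv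
    · rwa [Module.finrank_fin_fun]
  have hq : Function.Injective q := Matrix.map_injective Int.cast_injective
  apply hq
  apply (Matrix.toLinAlgEquiv' (R := ℚ) (n := Fin d)).injective
  simpa only [map_mul] using hcomm.eq
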